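/- arXiv:0904.0893 — 3 statements merged into one kernel-verified Lean document; each statement's English description precedes it below -/
import Mathlib

section
/- Let H be a complex Hilbert space and let X, Y be bounded linear operators on H with XY = YX and Y* = Y, and set |Y| := (Y²)^{1/2}. Then for every subset M of H one has sup_{ξ,η∈M} |⟨XYξ, η⟩| ≤ ‖X‖ · sup_{ξ∈M} ⟨|Y|ξ, ξ⟩ (suprema taken in [0,∞]). Consequently, if moreover Y ≥ 0 and XY = YX, then sup_{ξ,η∈M} |⟨XYξ, η⟩| ≤ ‖X‖ · sup_{ξ∈M} ⟨Yξ, ξ⟩. (Inequality (4.5)) -/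
/-!
For a positive `P` commuting with `X`, `⟨XPξ, η⟩ = ⟨X√P ξ, √P η⟩`, and Cauchy–Schwarz bounds this
by `‖X‖ ⟨Pξ, ξ⟩^{1/2} ⟨Pη, η⟩^{1/2}`. A self-adjoint `Y` is the difference `Y⁺ - Y⁻` of two such
operators, while `|Y| = Y⁺ + Y⁻`; adding the two bounds by Cauchy–Schwarz in `ℝ²` yields
`|⟨XYξ, η⟩| ≤ ‖X‖ ⟨|Y|ξ, ξ⟩^{1/2} ⟨|Y|η, η⟩^{1/2}`.
-/

open scoped ENNReal NNReal InnerProductSpace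

lemma sqrt_mul_sqrt_add_sqrt_mul_sqrt_le {a b c d : ℝ} (ha : 0 ≤ a) (hb : 0 ≤ b) (hc : 0 ≤ c)
    (hd : 0 ≤ d) : √a * √b + √c * √d ≤ √(a + c) * √(b + d) := by
  simpa only [Fin.sum_univ_two, Matrix.cons_val_zero, Matrix.cons_val_one] using
    Real.sum_sqrt_mul_sqrt_le Finset.univ (f := ![a, c]) (g := ![b, d])
      (Fin.forall_fin_two.2 ⟨ha, hc⟩) (Fin.forall_fin_two.2 ⟨hb, hd⟩)

section RCLike

variable {𝕜 E : Type*} [RCLike 𝕜] [NormedAddCommGroup E] [InnerProductSpace 𝕜 E]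

lemma reApplyInnerSelf_add (S T : E →L[𝕜] E) (ξ : E) :
    (S + T).reApplyInnerSelf ξ = S.reApplyInnerSelf ξ + T.reApplyInnerSelf ξ := by
  simp only [ContinuousLinearMap.reApplyInnerSelf_apply, add_apply, inner_add_left, map_add]

lemma sqrt_reApplyInnerSelf_mul_sqrt_le_max (T : E →L[𝕜] E) (ξ η : E) :
    √(T.reApplyInnerSelf ξ) * √(T.reApplyInnerSelf η) ≤ max ‖⟪T ξ, ξ⟫_𝕜‖ ‖⟪T η, η⟫_𝕜‖ := by
  set m := max ‖⟪T ξ, ξ⟫_𝕜‖ ‖⟪T η, η⟫_𝕜‖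
  have hξ : T.reApplyInnerSelf ξ ≤ m := (RCLike.re_le_norm _).trans (le_max_left _ _)
  have hη : T.reApplyInnerSelf η ≤ m := (RCLike.re_le_norm _).trans (le_max_right _ _)
  calc √(T.reApplyInnerSelf ξ) * √(T.reApplyInnerSelf η) ≤ √m * √m := by gcongr
    _ = m := Real.mul_self_sqrt (by positivity)

lemma norm_inner_apply_mul_self_le {X R : E →L[𝕜] E} (hXR : Commute X R)
    (hR : R.IsSymmetric) (ξ η : E) :
    ‖⟪X ((R * R) ξ), η⟫_𝕜‖ ≤ ‖X‖ * (‖R ξ‖ * ‖R η‖) := by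
  have hmove : X ((R * R) ξ) = R (X (R ξ)) := DFunLike.congr_fun hXR.eq (R ξ)
  calc ‖⟪X ((R * R) ξ), η⟫_𝕜‖ = ‖⟪X (R ξ), R η⟫_𝕜‖ := by rw [hmove]; exact congrArg _ (hR _ _)
    _ ≤ ‖X (R ξ)‖ * ‖R η‖ := norm_inner_le_norm _ _
    _ ≤ ‖X‖ * ‖R ξ‖ * ‖R η‖ := by gcongr; exact X.le_opNorm _
    _ = ‖X‖ * (‖R ξ‖ * ‖R η‖) := mul_assoc _ _ _

end RCLike

section Complex

variable {H : Type*} [NormedAddCommGroup H] [InnerProductSpace ℂ H] [CompleteSpace H]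

lemma norm_cfcSqrt_apply {P : H →L[ℂ] H} (hP : 0 ≤ P) (ξ : H) :
    ‖CFC.sqrt P ξ‖ = √(P.reApplyInnerSelf ξ) := by
  have hadj : (CFC.sqrt P).adjoint = CFC.sqrt P := (CFC.sqrt_nonneg P).isSelfAdjoint
  have hsq : CFC.sqrt P ∘L CFC.sqrt P = P := CFC.sqrt_mul_sqrt_self P
  rw [ContinuousLinearMap.apply_norm_eq_sqrt_inner_adjoint_left, hadj, hsq,
    ContinuousLinearMap.reApplyInnerSelf_apply]

lemma norm_inner_apply_le_of_nonneg {X P : H →L[ℂ] H} (hXP : Commute X P) (hP : 0 ≤ P) (ξ η : H) :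
    ‖⟪X (P ξ), η⟫_ℂ‖ ≤ ‖X‖ * (√(P.reApplyInnerSelf ξ) * √(P.reApplyInnerSelf η)) := by
  have hcomm : Commute X (CFC.sqrt P) := (hXP.symm.cfcₙ_nnreal _).symm
  have hsymm : (CFC.sqrt P).IsSymmetric := (CFC.sqrt_nonneg P).isSelfAdjoint.isSymmetric
  simpa only [CFC.sqrt_mul_sqrt_self P, norm_cfcSqrt_apply hP] using
    norm_inner_apply_mul_self_le hcomm hsymm ξ η

lemma norm_inner_apply_le_of_isSelfAdjoint {X Y : H →L[ℂ] H} (hXY : Commute X Y)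
    (hY : IsSelfAdjoint Y) (ξ η : H) :
    ‖⟪X (Y ξ), η⟫_ℂ‖ ≤
      ‖X‖ * (√((CFC.abs Y).reApplyInnerSelf ξ) * √((CFC.abs Y).reApplyInnerSelf η)) := by
  have hpos : 0 ≤ Y⁺ := CFC.posPart_nonneg Y
  have hneg : 0 ≤ Y⁻ := CFC.negPart_nonneg Y
  have hXpos : Commute X Y⁺ := (hXY.symm.cfcₙ_real _).symm
  have hXneg : Commute X Y⁻ := (hXY.symm.cfcₙ_real _).symm
  have hquad_pos := ((ContinuousLinearMap.nonneg_iff_isPositive _).1 hpos).2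
  have hquad_neg := ((ContinuousLinearMap.nonneg_iff_isPositive _).1 hneg).2
  have hsplit : ⟪X (Y ξ), η⟫_ℂ = ⟪X (Y⁺ ξ), η⟫_ℂ - ⟪X (Y⁻ ξ), η⟫_ℂ := by
    rw [← inner_sub_left, ← map_sub, ← sub_apply, CFC.posPart_sub_negPart Y]
  calc ‖⟪X (Y ξ), η⟫_ℂ‖ ≤ ‖⟪X (Y⁺ ξ), η⟫_ℂ‖ + ‖⟪X (Y⁻ ξ), η⟫_ℂ‖ := hsplit ▸ norm_sub_le _ _
    _ ≤ ‖X‖ * (√(Y⁺.reApplyInnerSelf ξ) * √(Y⁺.reApplyInnerSelf η)) +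
        ‖X‖ * (√(Y⁻.reApplyInnerSelf ξ) * √(Y⁻.reApplyInnerSelf η)) :=
      add_le_add (norm_inner_apply_le_of_nonneg hXpos hpos ξ η)
        (norm_inner_apply_le_of_nonneg hXneg hneg ξ η)
    _ ≤ ‖X‖ * (√((CFC.abs Y).reApplyInnerSelf ξ) * √((CFC.abs Y).reApplyInnerSelf η)) := by
      rw [← mul_add, ← CFC.posPart_add_negPart Y, reApplyInnerSelf_add, reApplyInnerSelf_add]
      gcongr
      exact sqrt_mul_sqrt_add_sqrt_mul_sqrt_le (hquad_pos ξ) (hquad_pos η) (hquad_neg ξ)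
        (hquad_neg η)

lemma iSup_enorm_inner_apply_le {X Y : H →L[ℂ] H} (hXY : Commute X Y) (hY : IsSelfAdjoint Y)
    (M : Set H) :
    ⨆ ξ ∈ M, ⨆ η ∈ M, ‖⟪X (Y ξ), η⟫_ℂ‖ₑ ≤ ‖X‖ₑ * ⨆ ξ ∈ M, ‖⟪CFC.abs Y ξ, ξ⟫_ℂ‖ₑ := by
  refine iSup₂_le fun ξ hξ => iSup₂_le fun η hη => ?_
  have hle : ‖⟪X (Y ξ), η⟫_ℂ‖ ≤
      ‖X‖ * max ‖⟪CFC.abs Y ξ, ξ⟫_ℂ‖ ‖⟪CFC.abs Y η, η⟫_ℂ‖ :=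
    (norm_inner_apply_le_of_isSelfAdjoint hXY hY ξ η).trans <| by
      gcongr
      exact sqrt_reApplyInnerSelf_mul_sqrt_le_max _ ξ η
  have hle_enorm : ‖⟪X (Y ξ), η⟫_ℂ‖ₑ ≤
      ‖X‖ₑ * max ‖⟪CFC.abs Y ξ, ξ⟫_ℂ‖ₑ ‖⟪CFC.abs Y η, η⟫_ℂ‖ₑ := by
    simp only [enorm_eq_nnnorm]
    exact_mod_cast hle
  refine hle_enorm.trans ?_
  gcongr
  exact max_le (le_iSup₂_of_le ξ hξ le_rfl) (le_iSup₂_of_le η hη le_rfl)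

end Complex

/-- **Inequality (4.5).**  Let `H` be a complex Hilbert space and `X, Y` bounded operators
on `H` with `XY = YX` and `Y* = Y`, and let `|Y| = (Y²)^{1/2}` (i.e. the unique positive
operator `absY` with `absY² = Y²`).  Then for every subset `M ⊆ H`,
`sup_{ξ,η ∈ M} |⟨XYξ, η⟩| ≤ ‖X‖ · sup_{ξ ∈ M} ⟨|Y|ξ, ξ⟩` (suprema in `[0,∞]`).
Consequently, if moreover `Y ≥ 0`, then
`sup_{ξ,η ∈ M} |⟨XYξ, η⟩| ≤ ‖X‖ · sup_{ξ ∈ M} ⟨Yξ, ξ⟩`. -/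
theorem ineq_4_5 {H : Type} [NormedAddCommGroup H] [InnerProductSpace ℂ H] [CompleteSpace H]
    (X Y absY : H →L[ℂ] H)
    (hcomm : X * Y = Y * X)
    (hY : ContinuousLinearMap.adjoint Y = Y)
    (habs_pos : absY.IsPositive) (habs_sq : absY * absY = Y * Y) :
    (∀ M : Set H,
      (⨆ ξ ∈ M, ⨆ η ∈ M, (‖⟪X (Y ξ), η⟫_ℂ‖₊ : ℝ≥0∞)) ≤
        (‖X‖₊ : ℝ≥0∞) * ⨆ ξ ∈ M, (‖⟪absY ξ, ξ⟫_ℂ‖₊ : ℝ≥0∞)) ∧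
    (Y.IsPositive → ∀ M : Set H,
      (⨆ ξ ∈ M, ⨆ η ∈ M, (‖⟪X (Y ξ), η⟫_ℂ‖₊ : ℝ≥0∞)) ≤
        (‖X‖₊ : ℝ≥0∞) * ⨆ ξ ∈ M, (‖⟪Y ξ, ξ⟫_ℂ‖₊ : ℝ≥0∞)) := by
  have hsa : IsSelfAdjoint Y := hY
  have habs : CFC.abs Y = absY :=
    CFC.sqrt_unique (habs_sq.trans (congrArg (· * Y) hsa.star_eq.symm))
      ((ContinuousLinearMap.nonneg_iff_isPositive _).2 habs_pos)
  have hle_abs := iSup_enorm_inner_apply_le hcomm hsa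
  refine ⟨habs ▸ hle_abs, fun hpos => ?_⟩
  rw [CFC.abs_of_nonneg Y ((ContinuousLinearMap.nonneg_iff_isPositive _).2 hpos)] at hle_abs
  exact hle_abs
end

section
/- The strong* topology τ_{s*}, restricted to M₀, is compatible with the operator-norm topology of M₀ and satisfies conditions (T₁)–(T₄); consequently the completion of M₀ with respect to τ_{s*} is a locally convex quasi C*-algebra over M₀. (Proposition 4.1, strong* case) -/
/-!
The seminorms satisfy `‖Xξ‖ ≤ p_ξ(X) ≤ 2‖ξ‖‖X‖`. By the upper bound, norm convergence implies
strong* convergence; by the lower bound, strong* convergence implies pointwise convergence on the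
dense set `D`. Hence a norm-Cauchy net that is strong* convergent has its norm limit in `B(H)` equal
to its strong* limit, because two bounded operators agreeing on `D` are equal. This gives
compatibility.

The multiplication is separately continuous because `p_ξ(XY) ≤ p_{Yξ}(X) + ‖Y‖ p_ξ(X)`, together
with the adjoint of this inequality, and the invariance of `D` keeps `Yξ` and `Y*ξ` in `D`. If `X`
and `Y` commute then `(XY)* = X*Y*`, so `X` and `X*` act last and `p_ξ(XY) ≤ ‖X‖ p_ξ(Y)`. For (T₄),
positivity and `‖X‖ ≤ 1` are closed conditions on the vectors of `H`: they can be checked on `D`,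
where they survive pointwise limits.
-/

open Filter Topology ContinuousLinearMap
open scoped InnerProductSpace

noncomputable section

variable {H : Type} [NormedAddCommGroup H] [InnerProductSpace ℂ H] [CompleteSpace H]

/-- The strong* seminorm `X ↦ ‖Xξ‖ + ‖X*ξ‖` on `B(H)` attached to a vector `ξ`. -/
def strongStarSeminorm (ξ : H) : Seminorm ℂ (H →L[ℂ] H) where
  toFun X := ‖X ξ‖ + ‖(ContinuousLinearMap.adjoint X) ξ‖
  map_zero' := by simp
  add_le' X Y := by
    simp only [ContinuousLinearMap.add_apply, map_add]
    have h1 := norm_add_le (X ξ) (Y ξ)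
    have h2 := norm_add_le ((ContinuousLinearMap.adjoint X) ξ)
      ((ContinuousLinearMap.adjoint Y) ξ)
    linarith
  neg' X := by simp
  smul' c X := by
    have h : ContinuousLinearMap.adjoint (c • X)
        = (starRingEnd ℂ) c • ContinuousLinearMap.adjoint X := by
      simp [map_smulₛₗ]
    simp only [h, ContinuousLinearMap.smul_apply, norm_smul, RCLike.norm_conj]
    ring

/-- A filter on `S` is Cauchy for the strong* topology `τ_{s*}` determined by the dense
domain `D`. -/
def StrongStarCauchy (D : Submodule ℂ H) (S : StarSubalgebra ℂ (H →L[ℂ] H))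
    (l : Filter S) : Prop :=
  ∀ ξ ∈ D, ∀ ε : ℝ, 0 < ε → ∃ s ∈ l, ∀ X ∈ s, ∀ Y ∈ s,
    strongStarSeminorm ξ ((X : H →L[ℂ] H) - (Y : H →L[ℂ] H)) < ε

open scoped InnerProduct

section DenseSet

variable {𝕜 𝕜₂ E F ι : Type*}

theorem opNorm_le_of_forall_mem_dense [NontriviallyNormedField 𝕜] [NontriviallyNormedField 𝕜₂]
    [SeminormedAddCommGroup E] [SeminormedAddCommGroup F] [NormedSpace 𝕜 E] [NormedSpace 𝕜₂ F]
    {σ : 𝕜 →+* 𝕜₂} {s : Set E} (hs : Dense s) {T : E →SL[σ] F} {C : ℝ} (hC : 0 ≤ C)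
    (hT : ∀ x ∈ s, ‖T x‖ ≤ C * ‖x‖) : ‖T‖ ≤ C := by
  refine T.opNorm_le_bound hC fun x => ?_
  have hclosed : IsClosed {x | ‖T x‖ ≤ C * ‖x‖} := isClosed_le (by fun_prop) (by fun_prop)
  exact hclosed.closure_subset_iff.2 hT (hs x)

theorem opNorm_le_of_tendsto_of_dense [NontriviallyNormedField 𝕜] [NontriviallyNormedField 𝕜₂]
    [SeminormedAddCommGroup E] [SeminormedAddCommGroup F] [NormedSpace 𝕜 E] [NormedSpace 𝕜₂ F]
    {σ : 𝕜 →+* 𝕜₂} [RingHomIsometric σ] {s : Set E} (hs : Dense s) {l : Filter ι} [l.NeBot]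
    {A : ι → E →SL[σ] F} {T : E →SL[σ] F} {C : ℝ} (hA : ∀ᶠ i in l, ‖A i‖ ≤ C)
    (hlim : ∀ x ∈ s, Tendsto (fun i => A i x) l (𝓝 (T x))) : ‖T‖ ≤ C := by
  obtain ⟨i, hi⟩ := hA.exists
  refine opNorm_le_of_forall_mem_dense hs ((norm_nonneg _).trans hi) fun x hx => ?_
  exact le_of_tendsto (hlim x hx).norm (hA.mono fun i hi => (A i).le_of_opNorm_le hi x)

variable [RCLike 𝕜] [NormedAddCommGroup E] [InnerProductSpace 𝕜 E]

theorem isPositive_of_forall_mem_dense {s : Set E} (hs : Dense s) {T : E →L[𝕜] E}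
    (hsymm : ∀ x ∈ s, ∀ y ∈ s, ⟪T x, y⟫_𝕜 = ⟪x, T y⟫_𝕜)
    (hnonneg : ∀ x ∈ s, 0 ≤ T.reApplyInnerSelf x) : T.IsPositive := by
  refine ⟨fun x y => ?_, fun x => ?_⟩
  · have heq : (fun p : E × E => ⟪T p.1, p.2⟫_𝕜) = fun p => ⟪p.1, T p.2⟫_𝕜 :=
      Continuous.ext_on (hs.prod hs) (by fun_prop) (by fun_prop)
        fun p hp => hsymm p.1 hp.1 p.2 hp.2
    exact congrFun heq (x, y)
  · have hclosed : IsClosed {x | 0 ≤ T.reApplyInnerSelf x} :=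
      isClosed_le continuous_const T.reApplyInnerSelf_continuous
    exact hclosed.closure_subset_iff.2 hnonneg (hs x)

theorem isPositive_of_tendsto_of_dense {s : Set E} (hs : Dense s) {l : Filter ι} [l.NeBot]
    {A : ι → E →L[𝕜] E} {T : E →L[𝕜] E} (hA : ∀ᶠ i in l, (A i).IsPositive)
    (hlim : ∀ x ∈ s, Tendsto (fun i => A i x) l (𝓝 (T x))) : T.IsPositive := by
  refine isPositive_of_forall_mem_dense hs (fun x hx y hy => ?_) fun x hx => ?_
  · have hleft := (hlim x hx).inner (𝕜 := 𝕜) (tendsto_const_nhds (x := y))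
    have hright := (tendsto_const_nhds (x := x)).inner (𝕜 := 𝕜) (hlim y hy)
    exact tendsto_nhds_unique_of_eventuallyEq hleft hright
      (hA.mono fun i hi => hi.inner_left_eq_inner_right x y)
  · have hre := (RCLike.continuous_re.tendsto _).comp
      ((hlim x hx).inner (𝕜 := 𝕜) (tendsto_const_nhds (x := x)))
    exact ge_of_tendsto hre (hA.mono fun i hi => hi.re_inner_nonneg_left x)

end DenseSet

theorem norm_adjoint_apply_le {𝕜 E F : Type*} [RCLike 𝕜] [NormedAddCommGroup E]
    [InnerProductSpace 𝕜 E] [CompleteSpace E] [NormedAddCommGroup F] [InnerProductSpace 𝕜 F]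
    [CompleteSpace F] (T : E →L[𝕜] F) (y : F) : ‖(T†) y‖ ≤ ‖T‖ * ‖y‖ :=
  (T†).le_of_opNorm_le (LinearIsometryEquiv.norm_map adjoint T).le y

theorem strongStarSeminorm_apply (ξ : H) (X : H →L[ℂ] H) :
    strongStarSeminorm ξ X = ‖X ξ‖ + ‖(X†) ξ‖ := rfl

theorem norm_apply_le_strongStarSeminorm (ξ : H) (X : H →L[ℂ] H) :
    ‖X ξ‖ ≤ strongStarSeminorm ξ X :=
  le_add_of_nonneg_right (norm_nonneg _)

theorem strongStarSeminorm_adjoint (ξ : H) (X : H →L[ℂ] H) :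
    strongStarSeminorm ξ (X†) = strongStarSeminorm ξ X := by
  rw [strongStarSeminorm_apply, strongStarSeminorm_apply, adjoint_adjoint, add_comm]

theorem norm_adjoint_apply_le_strongStarSeminorm (ξ : H) (X : H →L[ℂ] H) :
    ‖(X†) ξ‖ ≤ strongStarSeminorm ξ X :=
  le_add_of_nonneg_left (norm_nonneg _)

theorem strongStarSeminorm_le_norm (ξ : H) (X : H →L[ℂ] H) :
    strongStarSeminorm ξ X ≤ 2 * ‖ξ‖ * ‖X‖ :=
  calc ‖X ξ‖ + ‖(X†) ξ‖ ≤ ‖X‖ * ‖ξ‖ + ‖X‖ * ‖ξ‖ :=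
        add_le_add (X.le_opNorm ξ) (norm_adjoint_apply_le X ξ)
    _ = 2 * ‖ξ‖ * ‖X‖ := by ring

theorem strongStarSeminorm_mul_le_add (ξ : H) (X Y : H →L[ℂ] H) :
    strongStarSeminorm ξ (X * Y) ≤ strongStarSeminorm (Y ξ) X + ‖Y‖ * strongStarSeminorm ξ X :=
  calc strongStarSeminorm ξ (X * Y) = ‖X (Y ξ)‖ + ‖(Y†) ((X†) ξ)‖ := by
        rw [strongStarSeminorm_apply, mul_def, adjoint_comp, comp_apply, comp_apply]
    _ ≤ ‖X (Y ξ)‖ + ‖Y‖ * ‖(X†) ξ‖ := by gcongr; exact norm_adjoint_apply_le Y _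
    _ ≤ strongStarSeminorm (Y ξ) X + ‖Y‖ * strongStarSeminorm ξ X := by
        gcongr
        · exact norm_apply_le_strongStarSeminorm (Y ξ) X
        · exact norm_adjoint_apply_le_strongStarSeminorm ξ X

theorem strongStarSeminorm_mul_le_of_commute (ξ : H) {X Y : H →L[ℂ] H} (hXY : Commute X Y) :
    strongStarSeminorm ξ (X * Y) ≤ ‖X‖ * strongStarSeminorm ξ Y := by
  have hadj : (X * Y)† = X† * Y† := by rw [hXY.eq, mul_def, adjoint_comp, mul_def]
  calc strongStarSeminorm ξ (X * Y) = ‖X (Y ξ)‖ + ‖(X†) ((Y†) ξ)‖ := by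
        rw [strongStarSeminorm_apply, hadj, mul_apply_eq_comp, mul_apply_eq_comp]
    _ ≤ ‖X‖ * ‖Y ξ‖ + ‖X‖ * ‖(Y†) ξ‖ :=
        add_le_add (X.le_opNorm _) (norm_adjoint_apply_le X _)
    _ = ‖X‖ * strongStarSeminorm ξ Y := by rw [strongStarSeminorm_apply, mul_add]

theorem strongStarSeminorm_mul_right_le_finset_sup {ξ : H} {Y : H →L[ℂ] H} {s : Finset H}
    (hξ : ξ ∈ s) (hYξ : Y ξ ∈ s) (X : H →L[ℂ] H) :
    strongStarSeminorm ξ (X * Y) ≤ (1 + ‖Y‖) * s.sup strongStarSeminorm X :=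
  calc strongStarSeminorm ξ (X * Y)
      ≤ strongStarSeminorm (Y ξ) X + ‖Y‖ * strongStarSeminorm ξ X :=
        strongStarSeminorm_mul_le_add ξ X Y
    _ ≤ s.sup strongStarSeminorm X + ‖Y‖ * s.sup strongStarSeminorm X := by
        gcongr <;> exact Seminorm.le_finset_sup_apply ‹_›
    _ = (1 + ‖Y‖) * s.sup strongStarSeminorm X := by ring

theorem finset_sup_strongStarSeminorm_adjoint (s : Finset H) (X : H →L[ℂ] H) :
    s.sup strongStarSeminorm (X†) = s.sup strongStarSeminorm X := by
  simp only [Seminorm.finset_sup_apply, strongStarSeminorm_adjoint]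

theorem strongStarSeminorm_mul_left_le_finset_sup {ξ : H} {Y : H →L[ℂ] H} {s : Finset H}
    (hξ : ξ ∈ s) (hYξ : (Y†) ξ ∈ s) (X : H →L[ℂ] H) :
    strongStarSeminorm ξ (Y * X) ≤ (1 + ‖Y‖) * s.sup strongStarSeminorm X :=
  calc strongStarSeminorm ξ (Y * X) = strongStarSeminorm ξ (X† * Y†) := by
        rw [← strongStarSeminorm_adjoint, mul_def, adjoint_comp, mul_def]
    _ ≤ (1 + ‖Y†‖) * s.sup strongStarSeminorm (X†) :=
        strongStarSeminorm_mul_right_le_finset_sup hξ hYξ (X†)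
    _ = (1 + ‖Y‖) * s.sup strongStarSeminorm X := by
        rw [LinearIsometryEquiv.norm_map, finset_sup_strongStarSeminorm_adjoint]

theorem exists_finset_sup_strongStarSeminorm_mul_le {D : Set H} {Y : H →L[ℂ] H}
    (hY : Set.MapsTo Y D D) (hYadj : Set.MapsTo (Y†) D D) {ξ : H} (hξ : ξ ∈ D) :
    ∃ (C : ℝ) (s : Finset H), ↑s ⊆ D ∧ 0 ≤ C ∧ ∀ X : H →L[ℂ] H,
      strongStarSeminorm ξ (X * Y) ≤ C * s.sup strongStarSeminorm X ∧
        strongStarSeminorm ξ (Y * X) ≤ C * s.sup strongStarSeminorm X := by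
  classical
  refine ⟨1 + ‖Y‖, {ξ, Y ξ, (Y†) ξ}, ?_, by positivity, fun X => ⟨?_, ?_⟩⟩
  · simp [Set.insert_subset_iff, hξ, hY hξ, hYadj hξ]
  · exact strongStarSeminorm_mul_right_le_finset_sup (by simp) (by simp) X
  · exact strongStarSeminorm_mul_left_le_finset_sup (by simp) (by simp) X

/-- Convergence of a family of bounded operators along a filter in the strong* topology determined
by the vectors of `D`, expressed through its seminorms. -/
def TendstoStrongStar {ι : Type*} (D : Set H) (A : ι → H →L[ℂ] H) (l : Filter ι)
    (T : H →L[ℂ] H) : Prop :=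
  ∀ ξ ∈ D, Tendsto (fun i => strongStarSeminorm ξ (A i - T)) l (𝓝 0)

section TendstoStrongStar

variable {ι : Type*} {D : Set H} {A : ι → H →L[ℂ] H} {l : Filter ι} {T : H →L[ℂ] H}

theorem TendstoStrongStar.tendsto_apply (h : TendstoStrongStar D A l T) {ξ : H} (hξ : ξ ∈ D) :
    Tendsto (fun i => A i ξ) l (𝓝 (T ξ)) :=
  tendsto_iff_norm_sub_tendsto_zero.2 <| squeeze_zero (fun _ => norm_nonneg _)
    (fun i => norm_apply_le_strongStarSeminorm ξ (A i - T)) (h ξ hξ)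

theorem tendstoStrongStar_of_tendsto (D : Set H) (h : Tendsto A l (𝓝 T)) :
    TendstoStrongStar D A l T := by
  intro ξ _
  have hbound : Tendsto (fun i => 2 * ‖ξ‖ * ‖A i - T‖) l (𝓝 0) := by
    simpa only [mul_zero] using (tendsto_iff_norm_sub_tendsto_zero.1 h).const_mul (2 * ‖ξ‖)
  exact squeeze_zero (fun _ => apply_nonneg _ _)
    (fun i => strongStarSeminorm_le_norm ξ (A i - T)) hbound

theorem TendstoStrongStar.unique [l.NeBot] (hD : Dense D) {T' : H →L[ℂ] H}
    (h : TendstoStrongStar D A l T) (h' : TendstoStrongStar D A l T') : T = T' :=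
  DFunLike.coe_injective <| Continuous.ext_on hD T.continuous T'.continuous fun _ hξ =>
    tendsto_nhds_unique (h.tendsto_apply hξ) (h'.tendsto_apply hξ)

theorem tendsto_iff_tendstoStrongStar_of_cauchy (hD : Dense D) (hl : Cauchy (l.map A)) :
    Tendsto A l (𝓝 T) ↔ TendstoStrongStar D A l T := by
  refine ⟨tendstoStrongStar_of_tendsto D, fun h => ?_⟩
  have : l.NeBot := map_neBot_iff A |>.1 hl.1
  obtain ⟨T', hT' : Tendsto A l (𝓝 T')⟩ := CompleteSpace.complete hl
  rwa [h.unique hD (tendstoStrongStar_of_tendsto D hT')]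

theorem TendstoStrongStar.isPositive [l.NeBot] (hD : Dense D) (h : TendstoStrongStar D A l T)
    (hA : ∀ᶠ i in l, (A i).IsPositive) : T.IsPositive :=
  isPositive_of_tendsto_of_dense hD hA fun _ => h.tendsto_apply

theorem TendstoStrongStar.norm_le [l.NeBot] (hD : Dense D) (h : TendstoStrongStar D A l T)
    {C : ℝ} (hA : ∀ᶠ i in l, ‖A i‖ ≤ C) : ‖T‖ ≤ C :=
  opNorm_le_of_tendsto_of_dense hD hA fun _ => h.tendsto_apply

end TendstoStrongStar

theorem strongStar_lcqc_general {D : Set H} (hD : Dense D)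
    (S : NonUnitalStarSubalgebra ℂ (H →L[ℂ] H)) (hinv : ∀ X ∈ S, ∀ ξ ∈ D, X ξ ∈ D) :
    (∀ l : Filter S, Cauchy (l.map (fun X : S => (X : H →L[ℂ] H))) → ∀ X₀ : S,
      (Tendsto (fun X : S => (X : H →L[ℂ] H)) l (𝓝 X₀) ↔
        TendstoStrongStar D (fun X : S => (X : H →L[ℂ] H)) l X₀)) ∧
    (∀ Y ∈ S, ∀ ξ ∈ D, ∃ (C : ℝ) (s : Finset H), ↑s ⊆ D ∧ 0 ≤ C ∧
      ∀ X ∈ S, strongStarSeminorm ξ (X * Y) ≤ C * s.sup strongStarSeminorm X ∧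
        strongStarSeminorm ξ (Y * X) ≤ C * s.sup strongStarSeminorm X) ∧
    (∀ ξ ∈ D, ∀ X : H →L[ℂ] H, strongStarSeminorm ξ (X†) = strongStarSeminorm ξ X) ∧
    (∀ ξ ∈ D, ∃ C : ℝ, ∀ X : H →L[ℂ] H, strongStarSeminorm ξ X ≤ C * ‖X‖) ∧
    (∀ ξ ∈ D, ∃ η ∈ D, ∀ X ∈ S, ∀ Y ∈ S, X * Y = Y * X →
      strongStarSeminorm ξ (X * Y) ≤ ‖X‖ * strongStarSeminorm η Y) ∧
    (∀ (ι : Type*) (l : Filter ι) (A : ι → S), l.NeBot →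
      (∀ i, (A i : H →L[ℂ] H).IsPositive ∧ ‖(A i : H →L[ℂ] H)‖ ≤ 1) →
      ∀ X₀ : S, TendstoStrongStar D (fun i => (A i : H →L[ℂ] H)) l X₀ →
        (X₀ : H →L[ℂ] H).IsPositive ∧ ‖(X₀ : H →L[ℂ] H)‖ ≤ 1) ∧
    (∀ (ι : Type*) (l : Filter ι) (A : ι → S), l.NeBot →
      (∀ i, (A i : H →L[ℂ] H).IsPositive) →
      ∀ X₀ : S, TendstoStrongStar D (fun i => (A i : H →L[ℂ] H)) l X₀ →
        (X₀ : H →L[ℂ] H).IsPositive) := by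
  refine ⟨fun l hl X₀ => tendsto_iff_tendstoStrongStar_of_cauchy hD hl, fun Y hY ξ hξ => ?_,
    fun ξ _ => strongStarSeminorm_adjoint ξ, fun ξ _ => ⟨2 * ‖ξ‖, strongStarSeminorm_le_norm ξ⟩,
    fun ξ hξ => ⟨ξ, hξ, fun X _ Y _ => strongStarSeminorm_mul_le_of_commute ξ⟩,
    fun ι l A _ hA X₀ h => ?_, fun ι l A _ hA X₀ h => h.isPositive hD (.of_forall hA)⟩
  · obtain ⟨C, s, hs, hC, hle⟩ :=
      exists_finset_sup_strongStarSeminorm_mul_le (hinv Y hY) (hinv (Y†) (star_mem hY)) hξ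
    exact ⟨C, s, hs, hC, fun X _ => hle X⟩
  · exact ⟨h.isPositive hD (.of_forall fun i => (hA i).1),
      h.norm_le hD (.of_forall fun i => (hA i).2)⟩

/-- **Proposition 4.1 (strong* case).**  Let `M₀` be a unital C*-algebra of bounded
operators on `H` leaving a dense subspace `D` invariant.  Then the strong* topology
`τ_{s*}` (given by the seminorms `p_ξ(X) = ‖Xξ‖ + ‖X*ξ‖`, `ξ ∈ D`) on `M₀` is compatible
with the operator-norm topology of `M₀` and satisfies conditions (T₁)–(T₄); consequently
(by Definition 3.3) the completion of `M₀` with respect to `τ_{s*}` is a locally convex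
quasi C*-algebra over `M₀`. -/
theorem strongStar_lcqc (D : Submodule ℂ H) (hD : Dense (D : Set H))
    (S : StarSubalgebra ℂ (H →L[ℂ] H)) (hSclosed : IsClosed (S : Set (H →L[ℂ] H)))
    (hinv : ∀ X ∈ S, ∀ ξ ∈ D, X ξ ∈ D) :
    -- compatibility of `τ_{s*}` with the norm topology of `M₀`
    (∀ l : Filter S, l.NeBot → Cauchy (l.map (fun X : S => (X : H →L[ℂ] H))) →
      StrongStarCauchy D S l →
      ((∃ X₀ : S, Tendsto (fun X : S => (X : H →L[ℂ] H)) l (nhds (X₀ : H →L[ℂ] H))) ↔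
        (∃ X₀ : S, ∀ ξ ∈ D, Tendsto
          (fun X : S => strongStarSeminorm ξ ((X : H →L[ℂ] H) - (X₀ : H →L[ℂ] H)))
          l (nhds 0)))) ∧
    -- (T₁): the multiplication of `M₀` is separately `τ_{s*}`-continuous
    (∀ Y ∈ S, ∀ ξ ∈ D, ∃ (C : ℝ) (s : Finset H), (↑s ⊆ (D : Set H)) ∧ 0 ≤ C ∧
      ∀ X ∈ S, strongStarSeminorm ξ (X * Y) ≤ C * (s.sup strongStarSeminorm) X ∧
        strongStarSeminorm ξ (Y * X) ≤ C * (s.sup strongStarSeminorm) X) ∧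
    -- (T₁), continuity of the involution: `p_ξ(X*) = p_ξ(X)`
    (∀ ξ ∈ D, ∀ X : H →L[ℂ] H,
      strongStarSeminorm ξ (ContinuousLinearMap.adjoint X) = strongStarSeminorm ξ X) ∧
    -- (T₂): `τ_{s*}` is coarser than the norm topology
    (∀ ξ ∈ D, ∃ C : ℝ, ∀ X : H →L[ℂ] H, strongStarSeminorm ξ X ≤ C * ‖X‖) ∧
    -- (T₃)
    (∀ ξ ∈ D, ∃ η ∈ D, ∀ X ∈ S, ∀ Y ∈ S, X * Y = Y * X →
      strongStarSeminorm ξ (X * Y) ≤ ‖X‖ * strongStarSeminorm η Y) ∧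
    -- (T₄), first half: `U(M₀)₊` is `τ_{s*}`-closed
    (∀ (ι' : Type) (l : Filter ι') (F : ι' → S), l.NeBot →
      (∀ i, (F i : H →L[ℂ] H).IsPositive ∧ ‖(F i : H →L[ℂ] H)‖ ≤ 1) →
      ∀ X₀ : S, (∀ ξ ∈ D, Tendsto
          (fun i => strongStarSeminorm ξ ((F i : H →L[ℂ] H) - (X₀ : H →L[ℂ] H)))
          l (nhds 0)) →
        (X₀ : H →L[ℂ] H).IsPositive ∧ ‖(X₀ : H →L[ℂ] H)‖ ≤ 1) ∧
    -- (T₄), second half: `Ã₀[τ_{s*}]_{q+} ∩ M₀ = (M₀)₊`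
    (∀ (ι' : Type) (l : Filter ι') (F : ι' → S), l.NeBot →
      (∀ i, (F i : H →L[ℂ] H).IsPositive) →
      ∀ X₀ : S, (∀ ξ ∈ D, Tendsto
          (fun i => strongStarSeminorm ξ ((F i : H →L[ℂ] H) - (X₀ : H →L[ℂ] H)))
          l (nhds 0)) →
        (X₀ : H →L[ℂ] H).IsPositive) := by
  obtain ⟨hcompat, hrest⟩ := strongStar_lcqc_general hD S.toNonUnitalStarSubalgebra hinv
  exact ⟨fun l _ hl _ => exists_congr fun X₀ => hcompat l hl X₀, hrest⟩
end
end

section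
/- Let D be a dense subspace of a complex Hilbert space H and let A : D → H be a linear operator whose adjoint A* has domain containing D. Suppose there exists a bounded linear operator B on H with B ≥ 0, ‖B‖ ≤ 1, and B(D) ⊆ D, such that B(ξ + Aξ) = ξ for all ξ ∈ D and Bξ + A(Bξ) = ξ for all ξ ∈ D (i.e., B is an inverse of I + A). Then A is closable and its closure Ā is a positive self-adjoint operator on H. (Proposition 4.3, (ii) ⇒ (iii)) -/
/-!
Let `G = {(B u, u - B u)} = {(x, y) | B (x + y) = x}` be the graph of the linear relation `B⁻¹ - 1`.
It is closed, and since `B` inverts `1 + T`, it contains the graph of `T` and its points with `u` in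
the dense domain of `T` lie in that graph; so `G` is the closure of the graph of `T`. The adjoint of
the relation `B⁻¹ - 1` is `(B†)⁻¹ - 1`, so `G` is its own adjoint. Hence `G` is the graph of `T†`,
which makes `T` closable, with self-adjoint closure `T†`. Positivity of the closure is
`⟪u - B u, B u⟫ ≥ 0`, that is, `B² ≤ B`, which follows from `0 ≤ B ≤ 1`.
-/

open scoped InnerProductSpace ComplexOrder

section Module

variable {R E : Type*} [Ring R] [AddCommGroup E] [Module R E] [TopologicalSpace E]
  [IsTopologicalAddGroup E] {B : E →L[R] E}

/-- The graph of the linear relation `B⁻¹ - 1`, parametrized by `u ↦ (B u, u - B u)`. When `B` is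
inverse to `1 + A`, this is the graph of `A`; a submodule of `E × E` makes sense even when `B` is
not injective. -/
def invSubOneGraph (B : E →L[R] E) : Submodule R (E × E) :=
  (B.prod (1 - B)).range

theorem mem_invSubOneGraph_iff {p : E × E} : p ∈ invSubOneGraph B ↔ B (p.1 + p.2) = p.1 := by
  constructor
  · rintro ⟨u, rfl⟩
    simp
  · intro hp
    exact ⟨p.1 + p.2, by ext <;> simp [hp]⟩

theorem isClosed_invSubOneGraph [T2Space E] : IsClosed (invSubOneGraph B : Set (E × E)) := by
  have hset : (invSubOneGraph B : Set (E × E)) = {p | B (p.1 + p.2) = p.1} :=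
    Set.ext fun _ => mem_invSubOneGraph_iff
  rw [hset]
  exact isClosed_eq (by fun_prop) (by fun_prop)

theorem topologicalClosure_eq_invSubOneGraph [T2Space E] [ContinuousConstSMul R E]
    {g : Submodule R (E × E)} (hg : g ≤ invSubOneGraph B) {D : Set E} (hD : Dense D)
    (hgD : ∀ u ∈ D, (B u, u - B u) ∈ g) : g.topologicalClosure = invSubOneGraph B := by
  refine le_antisymm (g.topologicalClosure_minimal hg isClosed_invSubOneGraph) ?_
  rintro _ ⟨u, rfl⟩
  exact map_mem_closure (B.prod (1 - B)).continuous (hD u) hgD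

end Module

section InnerProductSpace

variable {𝕜 E F : Type*} [RCLike 𝕜] [NormedAddCommGroup E] [InnerProductSpace 𝕜 E]
  [NormedAddCommGroup F] [InnerProductSpace 𝕜 F]

theorem adjoint_topologicalClosure (g : Submodule 𝕜 (E × F)) :
    g.topologicalClosure.adjoint = g.adjoint := by
  ext p
  simp only [Submodule.mem_adjoint_iff]
  refine ⟨fun h a b hab => h a b (g.le_topologicalClosure hab), fun h a b hab => ?_⟩
  have hclosed : IsClosed {q : E × F | ⟪q.2, p.1⟫_𝕜 - ⟪q.1, p.2⟫_𝕜 = 0} :=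
    isClosed_eq (by fun_prop) continuous_const
  exact closure_minimal (fun q hq => h q.1 q.2 hq) hclosed hab

theorem adjoint_invSubOneGraph [CompleteSpace E] (B : E →L[𝕜] E) :
    (invSubOneGraph B).adjoint = invSubOneGraph B.adjoint := by
  ext ⟨x, y⟩
  have hpair (u : E) :
      ⟪u - B u, x⟫_𝕜 - ⟪B u, y⟫_𝕜 = ⟪u, x⟫_𝕜 - ⟪u, B.adjoint (x + y)⟫_𝕜 := by
    rw [B.adjoint_inner_right, inner_sub_left, inner_add_right]
    ring
  calc (x, y) ∈ (invSubOneGraph B).adjoint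
      ↔ ∀ u, ⟪u - B u, x⟫_𝕜 - ⟪B u, y⟫_𝕜 = 0 := by
        rw [Submodule.mem_adjoint_iff]
        exact ⟨fun h u => h _ _ ⟨u, rfl⟩, by rintro h _ _ ⟨u, ⟨⟩⟩; exact h u⟩
    _ ↔ ∀ u, ⟪u, x⟫_𝕜 = ⟪u, B.adjoint (x + y)⟫_𝕜 := by simp only [hpair, sub_eq_zero]
    _ ↔ x = B.adjoint (x + y) := ⟨ext_inner_left 𝕜, fun h u => congrArg (inner 𝕜 u) h⟩
    _ ↔ (x, y) ∈ invSubOneGraph B.adjoint := by rw [mem_invSubOneGraph_iff, eq_comm]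

section SelfAdjointClosure

variable [CompleteSpace E] {T : E →ₗ.[𝕜] E}

theorem isClosable_of_adjoint_topologicalClosure_graph_eq (hT : Dense (T.domain : Set E))
    (hself : T.graph.topologicalClosure.adjoint = T.graph.topologicalClosure) :
    T.IsClosable := by
  refine ⟨T.adjoint, ?_⟩
  rw [LinearPMap.adjoint_graph_eq_graph_adjoint hT, ← adjoint_topologicalClosure, hself]

theorem isSelfAdjoint_closure_of_adjoint_topologicalClosure_graph_eq
    (hT : Dense (T.domain : Set E))
    (hself : T.graph.topologicalClosure.adjoint = T.graph.topologicalClosure) :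
    IsSelfAdjoint T.closure := by
  have hclosable := isClosable_of_adjoint_topologicalClosure_graph_eq hT hself
  refine LinearPMap.isSelfAdjoint_def.2 (LinearPMap.eq_of_eq_graph ?_)
  rw [LinearPMap.adjoint_graph_eq_graph_adjoint (hT.mono T.le_closure.1),
    ← hclosable.graph_closure_eq_closure_graph, hself]

end SelfAdjointClosure

theorem le_one_of_isSymmetric_of_norm_le_one {B : E →L[𝕜] E}
    (hB : (B : E →ₗ[𝕜] E).IsSymmetric) (hnorm : ‖B‖ ≤ 1) : B ≤ 1 := by
  refine ⟨LinearMap.IsSymmetric.id.sub hB, fun x => ?_⟩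
  have hle : RCLike.re ⟪B x, x⟫_𝕜 ≤ RCLike.re ⟪x, x⟫_𝕜 :=
    calc RCLike.re ⟪B x, x⟫_𝕜 ≤ ‖B x‖ * ‖x‖ := re_inner_le_norm _ _
      _ ≤ ‖x‖ * ‖x‖ := by gcongr; simpa using B.le_of_opNorm_le hnorm x
      _ = RCLike.re ⟪x, x⟫_𝕜 := (inner_self_eq_norm_mul_norm x).symm
  simpa [ContinuousLinearMap.reApplyInnerSelf_apply, inner_sub_left] using hle

theorem inner_sub_apply_nonneg {B : E →L[𝕜] E} (hB₀ : 0 ≤ B) (hB₁ : B ≤ 1) (u : E) :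
    0 ≤ ⟪u - B u, B u⟫_𝕜 := by
  have hpos := (ContinuousLinearMap.nonneg_iff_isPositive B).1 hB₀
  -- `B - B² = B (1 - B) B + (1 - B) B (1 - B)`
  have hsplit : ⟪u - B u, B u⟫_𝕜 =
      ⟪(1 - B) (B u), B u⟫_𝕜 + ⟪u - B u, B (u - B u)⟫_𝕜 := by
    simp only [sub_apply, one_apply_eq_self, map_sub, inner_sub_left, inner_sub_right,
      hpos.inner_left_eq_inner_right]
    ring
  rw [hsplit]
  exact add_nonneg (hB₁.inner_nonneg_left _) (hpos.inner_nonneg_right _)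

theorem inner_nonneg_of_mem_invSubOneGraph {B : E →L[𝕜] E} (hB₀ : 0 ≤ B) (hB₁ : B ≤ 1)
    {p : E × E} (hp : p ∈ invSubOneGraph B) : 0 ≤ ⟪p.2, p.1⟫_𝕜 := by
  obtain ⟨u, rfl⟩ := hp
  exact inner_sub_apply_nonneg hB₀ hB₁ u

theorem prop_4_3_general [CompleteSpace E] (T : E →ₗ.[𝕜] E) (hdense : Dense (T.domain : Set E))
    (B : E →L[𝕜] E) (hBpos : B.IsPositive) (hBnorm : ‖B‖ ≤ 1)
    (hB1 : ∀ ξ : T.domain, B ((ξ : E) + T ξ) = ξ)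
    (hB2 : ∀ ξ : T.domain, ∃ η : T.domain, (η : E) = B (ξ : E) ∧ B (ξ : E) + T η = ξ) :
    T.IsClosable ∧ T.closure.adjoint = T.closure ∧
      ∀ ξ : T.closure.domain, 0 ≤ ⟪T.closure ξ, (ξ : E)⟫_𝕜 := by
  have hclosure : T.graph.topologicalClosure = invSubOneGraph B := by
    refine topologicalClosure_eq_invSubOneGraph (fun p hp => ?_) hdense fun u hu => ?_
    · obtain ⟨ξ, hξ⟩ := T.mem_graph_iff'.1 hp
      exact mem_invSubOneGraph_iff.2 (hξ ▸ hB1 ξ)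
    · obtain ⟨η, hη, hTη⟩ := hB2 ⟨u, hu⟩
      exact T.mem_graph_iff.2 ⟨η, hη, eq_sub_of_add_eq' hTη⟩
  have hself : T.graph.topologicalClosure.adjoint = T.graph.topologicalClosure := by
    rw [hclosure, adjoint_invSubOneGraph, hBpos.isSelfAdjoint.adjoint_eq]
  have hclosable := isClosable_of_adjoint_topologicalClosure_graph_eq hdense hself
  refine ⟨hclosable, isSelfAdjoint_closure_of_adjoint_topologicalClosure_graph_eq hdense hself,
    fun ξ => ?_⟩
  have hξ : ((ξ : E), T.closure ξ) ∈ invSubOneGraph B := by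
    rw [← hclosure, hclosable.graph_closure_eq_closure_graph]
    exact T.closure.mem_graph ξ
  exact inner_nonneg_of_mem_invSubOneGraph
    ((ContinuousLinearMap.nonneg_iff_isPositive B).2 hBpos)
    (le_one_of_isSymmetric_of_norm_le_one hBpos.isSymmetric hBnorm) hξ

end InnerProductSpace

/-- **Proposition 4.3, (ii) ⇒ (iii).**  Let `D` be a dense subspace of a complex Hilbert
space `H` and `A : D → H` a linear operator whose adjoint has domain containing `D`
(formalized as the partially defined operator `T` with dense domain `D`).  If there is a
bounded operator `B ≥ 0` with `‖B‖ ≤ 1` and `B(D) ⊆ D` which inverts `I + A`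
(`B(ξ + Aξ) = ξ` and `Bξ + A(Bξ) = ξ` for all `ξ ∈ D`), then `A` is closable and its
closure `Ā` is a positive self-adjoint operator on `H`. -/
theorem prop_4_3 {H : Type} [NormedAddCommGroup H] [InnerProductSpace ℂ H] [CompleteSpace H]
    (T : H →ₗ.[ℂ] H) (hdense : Dense (T.domain : Set H))
    (hadj : ∀ η ∈ T.domain, ∃ ζ : H, ∀ ξ : T.domain, (⟪T ξ, η⟫_ℂ : ℂ) = ⟪(ξ : H), ζ⟫_ℂ)
    (B : H →L[ℂ] H) (hBpos : B.IsPositive) (hBnorm : ‖B‖ ≤ 1)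
    (hBD : ∀ x ∈ T.domain, B x ∈ T.domain)
    (hB1 : ∀ ξ : T.domain, B ((ξ : H) + T ξ) = ξ)
    (hB2 : ∀ ξ : T.domain, ∃ η : T.domain, (η : H) = B (ξ : H) ∧ B (ξ : H) + T η = ξ) :
    T.IsClosable ∧ T.closure.adjoint = T.closure ∧
      ∀ ξ : T.closure.domain, 0 ≤ (⟪T.closure ξ, (ξ : H)⟫_ℂ : ℂ) :=
  prop_4_3_general T hdense B hBpos hBnorm hB1 hB2
end
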